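/- Let λ ≥ 2 be a natural number, M ∈ ℝ with M ≠ 0, and k ∈ ℝ. Define x(t) = 2M²·(cosh(|M|(λt + k)) + sinh(|M|(λt + k))) / (M²·cosh(2|M|k) + cosh(2|M|λt) + M²·sinh(2|M|k) + sinh(2|M|λt)) and z̃(t) = |M|·(M²·cosh(2|M|k) − cosh(2|M|λt) + M²·sinh(2|M|k) − sinh(2|M|λt)) / (M²·cosh(2|M|k) + cosh(2|M|λt) + M²·sinh(2|M|k) + sinh(2|M|λt)). Then t ↦ (x(t), 0, z̃(t)) is a solution of the rattleback system, it tends to the unstable equilibrium (0, 0, |M|) as t → −∞, and it tends to the unstable equilibrium (0, 0, −|M|) as t → +∞ (so it is a heteroclinic solution connecting these two equilibria). -/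

import Mathlib

open Real Filter

/-!
On the invariant plane `y = 0` the system reads `ẋ = λxz`, `ż = -λx²`, so `x² + z²` is conserved.
The half `x > 0` of the circle of radius `m` is parametrized by `(x, z) = (m sech θ, -m tanh θ)`,
and both equations become `dθ/dt = mλ`. With `m = |M|`, the explicit curve of the theorem is this
one, for the phase `θ = mλt - (mk + log m)`; its limits are those of `sech` and `tanh` at `±∞`.
-/

open scoped Topology

/-- The functions `x`, `y`, `z` form a solution, defined for all times, of the rattleback system
with parameter `lam`. The parameter is allowed to be any real number. -/
structure IsRattlebackSolution (lam : ℝ) (x y z : ℝ → ℝ) : Prop where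
  hasDerivAt_x : ∀ t, HasDerivAt x (lam * x t * z t) t
  hasDerivAt_y : ∀ t, HasDerivAt y (-(y t * z t)) t
  hasDerivAt_z : ∀ t, HasDerivAt z (y t ^ 2 - lam * x t ^ 2) t

lemma hasDerivAt_inv_cosh (θ : ℝ) :
    HasDerivAt (fun θ ↦ (cosh θ)⁻¹) (-((cosh θ)⁻¹ * tanh θ)) θ := by
  refine ((hasDerivAt_cosh θ).fun_inv (cosh_pos θ).ne').congr_deriv ?_
  rw [tanh_eq_sinh_div_cosh]
  ring

lemma hasDerivAt_tanh (θ : ℝ) : HasDerivAt tanh ((cosh θ)⁻¹ ^ 2) θ := by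
  have h := (hasDerivAt_sinh θ).fun_div (hasDerivAt_cosh θ) (cosh_pos θ).ne'
  simp only [← tanh_eq_sinh_div_cosh] at h
  refine h.congr_deriv ?_
  rw [← sq, ← sq, cosh_sq_sub_sinh_sq, one_div, inv_pow]

lemma tendsto_cosh_atTop : Tendsto cosh atTop atTop :=
  tendsto_atTop_mono (fun θ ↦ (sinh_lt_cosh θ).le) sinhOrderIso.tendsto_atTop

lemma tendsto_inv_cosh_atTop : Tendsto (fun θ ↦ (cosh θ)⁻¹) atTop (𝓝 0) :=
  tendsto_cosh_atTop.inv_tendsto_atTop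

lemma tendsto_inv_cosh_atBot : Tendsto (fun θ ↦ (cosh θ)⁻¹) atBot (𝓝 0) := by
  simpa [Function.comp_def] using tendsto_inv_cosh_atTop.comp tendsto_neg_atBot_atTop

lemma tanh_eq_one_sub (θ : ℝ) : tanh θ = 1 - exp (-θ) * (cosh θ)⁻¹ := by
  rw [← cosh_sub_sinh, sub_mul, mul_inv_cancel₀ (cosh_pos θ).ne', tanh_eq_sinh_div_cosh]
  ring

lemma tendsto_tanh_atTop : Tendsto tanh atTop (𝓝 1) := by
  have h := (tendsto_exp_neg_atTop_nhds_zero.mul tendsto_inv_cosh_atTop).const_sub 1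
  simpa [← tanh_eq_one_sub] using h

lemma tendsto_tanh_atBot : Tendsto tanh atBot (𝓝 (-1)) := by
  simpa [Function.comp_def] using (tendsto_tanh_atTop.comp tendsto_neg_atBot_atTop).neg

lemma isRattlebackSolution_sech_tanh (lam m c : ℝ) :
    IsRattlebackSolution lam (fun t ↦ m * (cosh (m * lam * t - c))⁻¹) (fun _ ↦ 0)
      (fun t ↦ -(m * tanh (m * lam * t - c))) := by
  have phase (t : ℝ) : HasDerivAt (fun t ↦ m * lam * t - c) (m * lam) t := by
    simpa using ((hasDerivAt_id t).const_mul (m * lam)).sub_const c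
  refine ⟨fun t ↦ ?_, fun t ↦ ?_, fun t ↦ ?_⟩
  · exact (((hasDerivAt_inv_cosh _).comp t (phase t)).const_mul m).congr_deriv (by ring)
  · exact (hasDerivAt_const t 0).congr_deriv (by ring)
  · exact (((hasDerivAt_tanh _).comp t (phase t)).const_mul m).neg.congr_deriv (by ring)

lemma tendsto_sech_tanh_atTop (m : ℝ) :
    Tendsto (fun θ ↦ (m * (cosh θ)⁻¹, (0 : ℝ), -(m * tanh θ))) atTop (𝓝 (0, 0, -m)) := by
  simpa using (tendsto_inv_cosh_atTop.const_mul m).prodMk_nhds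
    (tendsto_const_nhds.prodMk_nhds (tendsto_tanh_atTop.const_mul m).neg)

lemma tendsto_sech_tanh_atBot (m : ℝ) :
    Tendsto (fun θ ↦ (m * (cosh θ)⁻¹, (0 : ℝ), -(m * tanh θ))) atBot (𝓝 (0, 0, m)) := by
  simpa using (tendsto_inv_cosh_atBot.const_mul m).prodMk_nhds
    (tendsto_const_nhds.prodMk_nhds (tendsto_tanh_atBot.const_mul m).neg)

section LogPhase

variable {m : ℝ} (hm : 0 < m) (u v : ℝ)
include hm

lemma exp_sub_add_log : exp (u - (v + log m)) = exp u / (m * exp v) := by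
  rw [exp_sub, exp_add, exp_log hm, mul_comm]

lemma inv_cosh_sub_add_log :
    (cosh (u - (v + log m)))⁻¹ = 2 * m * exp (u + v) / (m ^ 2 * exp (2 * v) + exp (2 * u)) := by
  rw [cosh_eq, exp_neg, exp_sub_add_log hm, exp_add, two_mul u, two_mul v, exp_add, exp_add]
  field_simp
  ring

lemma tanh_sub_add_log :
    tanh (u - (v + log m)) =
      -((m ^ 2 * exp (2 * v) - exp (2 * u)) / (m ^ 2 * exp (2 * v) + exp (2 * u))) := by
  rw [tanh_eq, exp_neg, exp_sub_add_log hm, two_mul u, two_mul v, exp_add, exp_add]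
  field_simp
  ring

end LogPhase

theorem rattleback_heteroclinic_x_general {lam M : ℝ} (hlam : 0 < lam) (hM : M ≠ 0) (k : ℝ)
    (x zt : ℝ → ℝ)
    (hx : ∀ t : ℝ, x t = 2 * M ^ 2 * (cosh (|M| * (lam * t + k)) + sinh (|M| * (lam * t + k))) /
        (M ^ 2 * cosh (2 * |M| * k) + cosh (2 * |M| * lam * t) +
          M ^ 2 * sinh (2 * |M| * k) + sinh (2 * |M| * lam * t)))
    (hzt : ∀ t : ℝ, zt t = |M| *
        (M ^ 2 * cosh (2 * |M| * k) - cosh (2 * |M| * lam * t) +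
          M ^ 2 * sinh (2 * |M| * k) - sinh (2 * |M| * lam * t)) /
        (M ^ 2 * cosh (2 * |M| * k) + cosh (2 * |M| * lam * t) +
          M ^ 2 * sinh (2 * |M| * k) + sinh (2 * |M| * lam * t))) :
    IsRattlebackSolution lam x (fun _ ↦ 0) zt ∧
      Tendsto (fun t ↦ (x t, (0 : ℝ), zt t)) atBot (𝓝 (0, 0, |M|)) ∧
      Tendsto (fun t ↦ (x t, (0 : ℝ), zt t)) atTop (𝓝 (0, 0, -|M|)) := by
  have hm : 0 < |M| := abs_pos.mpr hM
  have sum_exp (t : ℝ) : M ^ 2 * cosh (2 * |M| * k) + cosh (2 * |M| * lam * t) +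
      M ^ 2 * sinh (2 * |M| * k) + sinh (2 * |M| * lam * t) =
        |M| ^ 2 * exp (2 * (|M| * k)) + exp (2 * (|M| * lam * t)) := by
    rw [sq_abs, ← cosh_add_sinh, ← cosh_add_sinh]
    ring_nf
  have diff_exp (t : ℝ) : M ^ 2 * cosh (2 * |M| * k) - cosh (2 * |M| * lam * t) +
      M ^ 2 * sinh (2 * |M| * k) - sinh (2 * |M| * lam * t) =
        |M| ^ 2 * exp (2 * (|M| * k)) - exp (2 * (|M| * lam * t)) := by
    rw [sq_abs, ← cosh_add_sinh, ← cosh_add_sinh]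
    ring_nf
  have x_eq : x = fun t ↦ |M| * (cosh (|M| * lam * t - (|M| * k + log |M|)))⁻¹ := by
    ext t
    rw [hx, sum_exp, cosh_add_sinh, inv_cosh_sub_add_log hm, ← sq_abs M, mul_add, ← mul_assoc]
    ring
  have zt_eq : zt = fun t ↦ -(|M| * tanh (|M| * lam * t - (|M| * k + log |M|))) := by
    ext t
    rw [hzt, sum_exp, diff_exp, tanh_sub_add_log hm, mul_neg, neg_neg, mul_div_assoc]
  have slope_pos : 0 < |M| * lam := mul_pos hm hlam
  subst x_eq zt_eq
  refine ⟨isRattlebackSolution_sech_tanh lam |M| _, ?_, ?_⟩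
  · exact (tendsto_sech_tanh_atBot |M|).comp <|
      tendsto_atBot_add_const_right _ _ (tendsto_id.const_mul_atBot slope_pos)
  · exact (tendsto_sech_tanh_atTop |M|).comp <|
      tendsto_atTop_add_const_right _ _ (tendsto_id.const_mul_atTop slope_pos)

/-- The explicit curve `t ↦ (x(t), 0, z̃(t))` is a heteroclinic solution of the rattleback
system `ẋ = λxz, ẏ = −yz, ż = y² − λx²`, connecting the unstable equilibria
`(0, 0, |M|)` (as `t → −∞`) and `(0, 0, −|M|)` (as `t → +∞`). -/
theorem rattleback_heteroclinic_x (lam : ℕ) (hlam : 2 ≤ lam) (M k : ℝ) (hM : M ≠ 0)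
    (x zt : ℝ → ℝ)
    (hx : ∀ t : ℝ, x t = 2 * M ^ 2 *
        (Real.cosh (|M| * ((lam : ℝ) * t + k)) + Real.sinh (|M| * ((lam : ℝ) * t + k))) /
        (M ^ 2 * Real.cosh (2 * |M| * k) + Real.cosh (2 * |M| * (lam : ℝ) * t) +
          M ^ 2 * Real.sinh (2 * |M| * k) + Real.sinh (2 * |M| * (lam : ℝ) * t)))
    (hzt : ∀ t : ℝ, zt t = |M| *
        (M ^ 2 * Real.cosh (2 * |M| * k) - Real.cosh (2 * |M| * (lam : ℝ) * t) +
          M ^ 2 * Real.sinh (2 * |M| * k) - Real.sinh (2 * |M| * (lam : ℝ) * t)) /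
        (M ^ 2 * Real.cosh (2 * |M| * k) + Real.cosh (2 * |M| * (lam : ℝ) * t) +
          M ^ 2 * Real.sinh (2 * |M| * k) + Real.sinh (2 * |M| * (lam : ℝ) * t))) :
    (∀ t : ℝ, HasDerivAt x ((lam : ℝ) * x t * zt t) t) ∧
    (∀ t : ℝ, HasDerivAt (fun _ : ℝ => (0 : ℝ)) (-((0 : ℝ) * zt t)) t) ∧
    (∀ t : ℝ, HasDerivAt zt ((0 : ℝ) ^ 2 - (lam : ℝ) * (x t) ^ 2) t) ∧
    Tendsto (fun t : ℝ => (x t, (0 : ℝ), zt t)) atBot (nhds (0, 0, |M|)) ∧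
    Tendsto (fun t : ℝ => (x t, (0 : ℝ), zt t)) atTop (nhds (0, 0, -|M|)) := by
  obtain ⟨sol, atBot_lim, atTop_lim⟩ :=
    rattleback_heteroclinic_x_general (by positivity) hM k x zt hx hzt
  exact ⟨sol.hasDerivAt_x, sol.hasDerivAt_y, sol.hasDerivAt_z, atBot_lim, atTop_lim⟩
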